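/- Let 0 < m < M, let f : [m,M] → (0,∞) be continuous and convex, and either increasing or decreasing on [m,M]. Let A be a bounded self-adjoint operator on a complex Hilbert space H with mI ≤ A ≤ MI, and let φ : B(H) → B(K) be a normalized positive linear map. Then for any t₀ ∈ (m,M) at which f is differentiable with f′(t₀) ≠ 0, one has f(φ(A)) ≤ α(f,t₀) · φ(f(A)) + β(f,t₀)·I. -/

import Mathlib

/-!
On `[m, M]` a convex function lies below its chord `a t + b` and above its tangent line at `t₀`.
Applied to `φ A`, the chord bound gives `f (φ A) ≤ a φ(A) + b` (`cfc_le_affine`). Applied to `A`, the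
tangent bound gives `f(t₀) - f'(t₀) t₀ + f'(t₀) A ≤ f(A)` (`affine_le_cfc`); the positive unital map
`φ` preserves this inequality, and so does multiplication by `α = a / f'(t₀)`, which is nonnegative
because monotonicity forces `a` and `f'(t₀)` to have the same sign. After this multiplication the
slope of the tangent becomes `a`, and `β` is exactly the constant that makes both bounds meet.
-/

noncomputable def chordSlope (m M : ℝ) (f : ℝ → ℝ) : ℝ := (f M - f m) / (M - m)

noncomputable def chordIntercept (m M : ℝ) (f : ℝ → ℝ) : ℝ := (M * f m - m * f M) / (M - m)

/-- `α(f,t₀) = a_f / f′(t₀)`. -/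
noncomputable def mpAlpha (m M : ℝ) (f : ℝ → ℝ) (t₀ : ℝ) : ℝ :=
  chordSlope m M f / deriv f t₀

/-- `β(f,t₀) = a_f·t₀ + b_f − a_f·f(t₀)/f′(t₀)`. -/
noncomputable def mpBeta (m M : ℝ) (f : ℝ → ℝ) (t₀ : ℝ) : ℝ :=
  chordSlope m M f * t₀ + chordIntercept m M f - chordSlope m M f * f t₀ / deriv f t₀

open Set

lemma le_chord {m M : ℝ} (hmM : m < M) {f : ℝ → ℝ} (hf : ConvexOn ℝ (Icc m M) f)
    {t : ℝ} (ht : t ∈ Icc m M) :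
    f t ≤ chordIntercept m M f + chordSlope m M f * t := by
  have h := hf.2 (left_mem_Icc.2 hmM.le) (right_mem_Icc.2 hmM.le)
    (show 0 ≤ (M - t) / (M - m) from div_nonneg (by linarith [ht.2]) (by linarith))
    (show 0 ≤ (t - m) / (M - m) from div_nonneg (by linarith [ht.1]) (by linarith))
    (by have : M - m ≠ 0 := by linarith
        field_simp; ring)
  have hne : M - m ≠ 0 := by linarith
  have e1 : ((M - t) / (M - m)) • m + ((t - m) / (M - m)) • M = t := by
    simp only [smul_eq_mul]; field_simp; ring
  rw [e1] at h
  refine h.trans (le_of_eq ?_)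
  simp only [smul_eq_mul, chordIntercept, chordSlope]; field_simp; ring

lemma tangent_le {m M : ℝ} {f : ℝ → ℝ} (hf : ConvexOn ℝ (Icc m M) f) {t₀ : ℝ}
    (ht₀ : t₀ ∈ Ioo m M) (hd : DifferentiableAt ℝ f t₀) {t : ℝ} (ht : t ∈ Icc m M) :
    (f t₀ - deriv f t₀ * t₀) + deriv f t₀ * t ≤ f t := by
  have h₀ : t₀ ∈ Icc m M := Ioo_subset_Icc_self ht₀
  rcases lt_trichotomy t t₀ with h | rfl | h
  · have := hf.slope_le_deriv ht h₀ h hd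
    rw [slope_def_field, div_le_iff₀ (by linarith)] at this
    linarith
  · linarith
  · have := hf.deriv_le_slope h₀ ht h hd
    rw [slope_def_field, le_div_iff₀ (by linarith)] at this
    linarith

lemma mpAlpha_nonneg {m M : ℝ} (hmM : m < M) {f : ℝ → ℝ}
    (hf : MonotoneOn f (Icc m M) ∨ AntitoneOn f (Icc m M)) {t₀ : ℝ} (ht₀ : t₀ ∈ Ioo m M) :
    0 ≤ mpAlpha m M f t₀ := by
  have hl := left_mem_Icc.2 hmM.le
  have hr := right_mem_Icc.2 hmM.le
  have hd := derivWithin_of_mem_nhds (f := f) (Icc_mem_nhds ht₀.1 ht₀.2)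
  unfold mpAlpha chordSlope
  rw [← hd]
  rcases hf with h | h
  · exact div_nonneg (div_nonneg (by linarith [h hl hr hmM.le]) (by linarith)) h.derivWithin_nonneg
  · exact div_nonneg_of_nonpos (div_nonpos_of_nonpos_of_nonneg (by linarith [h hl hr hmM.le])
      (by linarith)) h.derivWithin_nonpos

section Operator

variable {H : Type*} [NormedAddCommGroup H] [InnerProductSpace ℂ H] [CompleteSpace H]

lemma spectrum_subset_Icc {m M : ℝ} {A : H →L[ℂ] H} (hA : IsSelfAdjoint A)
    (h₁ : m • (1 : H →L[ℂ] H) ≤ A) (h₂ : A ≤ M • (1 : H →L[ℂ] H)) :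
    spectrum ℝ A ⊆ Icc m M := by
  rw [← Algebra.algebraMap_eq_smul_one] at h₁ h₂
  exact fun x hx => ⟨(algebraMap_le_iff_le_spectrum hA).1 h₁ x hx,
    (le_algebraMap_iff_spectrum_le hA).1 h₂ x hx⟩

lemma cfc_affine {A : H →L[ℂ] H} (hA : IsSelfAdjoint A) (b a : ℝ) :
    cfc (fun t : ℝ => b + a * t) A = b • (1 : H →L[ℂ] H) + a • A := by
  rw [cfc_const_add b (fun t : ℝ => a * t) A, cfc_const_mul_id a A, Algebra.algebraMap_eq_smul_one]

lemma cfc_le_affine {A : H →L[ℂ] H} (hA : IsSelfAdjoint A) {f : ℝ → ℝ} {a b : ℝ}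
    (hc : ContinuousOn f (spectrum ℝ A)) (h : ∀ t ∈ spectrum ℝ A, f t ≤ b + a * t) :
    cfc f A ≤ b • (1 : H →L[ℂ] H) + a • A := by
  rw [← cfc_affine hA]
  exact cfc_mono h

lemma affine_le_cfc {A : H →L[ℂ] H} (hA : IsSelfAdjoint A) {f : ℝ → ℝ} {a b : ℝ}
    (hc : ContinuousOn f (spectrum ℝ A)) (h : ∀ t ∈ spectrum ℝ A, b + a * t ≤ f t) :
    b • (1 : H →L[ℂ] H) + a • A ≤ cfc f A := by
  rw [← cfc_affine hA]
  exact cfc_mono h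

end Operator

theorem mond_pecaric_convex_function_side
    {H K : Type*} [NormedAddCommGroup H] [InnerProductSpace ℂ H] [CompleteSpace H]
    [NormedAddCommGroup K] [InnerProductSpace ℂ K] [CompleteSpace K]
    (m M : ℝ) (hm : 0 < m) (hmM : m < M)
    (f : ℝ → ℝ) (hf_cont : ContinuousOn f (Set.Icc m M))
    (hf_pos : ∀ t ∈ Set.Icc m M, 0 < f t)
    (hf_conv : ConvexOn ℝ (Set.Icc m M) f)
    (hf_mono : MonotoneOn f (Set.Icc m M) ∨ AntitoneOn f (Set.Icc m M))
    (A : H →L[ℂ] H) (hA : IsSelfAdjoint A)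
    (hA₁ : m • (1 : H →L[ℂ] H) ≤ A) (hA₂ : A ≤ M • (1 : H →L[ℂ] H))
    (φ : (H →L[ℂ] H) →ₗ[ℂ] (K →L[ℂ] K))
    (hφ_pos : ∀ X : H →L[ℂ] H, 0 ≤ X → 0 ≤ φ X)
    (hφ_one : φ 1 = 1)
    (t₀ : ℝ) (ht₀ : t₀ ∈ Set.Ioo m M) (hdiff : DifferentiableAt ℝ f t₀)
    (hderiv : deriv f t₀ ≠ 0) :
    cfc f (φ A) ≤ mpAlpha m M f t₀ • φ (cfc f A) + mpBeta m M f t₀ • 1 := by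
  have hmono : ∀ {X Y : H →L[ℂ] H}, X ≤ Y → φ X ≤ φ Y := fun {X Y} h => by
    have := hφ_pos (Y - X) (sub_nonneg.2 h)
    rwa [map_sub, sub_nonneg] at this
  have hsmul : ∀ (c : ℝ) (X : H →L[ℂ] H), φ (c • X) = c • φ X :=
    fun c X => φ.map_smul_of_tower c X
  have hB₁ : m • (1 : K →L[ℂ] K) ≤ φ A := by simpa [hsmul, hφ_one] using hmono hA₁
  have hB₂ : φ A ≤ M • (1 : K →L[ℂ] K) := by simpa [hsmul, hφ_one] using hmono hA₂
  have hB : IsSelfAdjoint (φ A) := by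
    have h := (IsSelfAdjoint.of_nonneg (sub_nonneg.2 hB₁)).add
      ((IsSelfAdjoint.all m).smul (IsSelfAdjoint.one (K →L[ℂ] K)))
    rwa [sub_add_cancel] at h
  have hsA := spectrum_subset_Icc hA hA₁ hA₂
  have hsB := spectrum_subset_Icc hB hB₁ hB₂
  have hupper := cfc_le_affine hB (hf_cont.mono hsB) fun t ht => le_chord hmM hf_conv (hsB ht)
  have hlower := hmono (affine_le_cfc hA (hf_cont.mono hsA)
    fun t ht => tangent_le hf_conv ht₀ hdiff (hsA ht))
  rw [map_add, hsmul, hsmul, hφ_one] at hlower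
  have hscaled := smul_le_smul_of_nonneg_left hlower (mpAlpha_nonneg hmM hf_mono ht₀)
  refine hupper.trans (le_trans (le_of_eq ?_)
    (add_le_add_left hscaled (mpBeta m M f t₀ • (1 : K →L[ℂ] K))))
  have e₁ : mpAlpha m M f t₀ * deriv f t₀ = chordSlope m M f := div_mul_cancel₀ _ hderiv
  have e₂ : mpAlpha m M f t₀ * (f t₀ - deriv f t₀ * t₀) + mpBeta m M f t₀
      = chordIntercept m M f := by
    unfold mpAlpha mpBeta
    field_simp
    ring
  rw [← e₂, ← e₁]
  module
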